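/- Let α ∈ (0, 1] be a fixed real number and for each B ≥ 1 set K_B = ⌈α·B⌉. Then in the coupon collector process with B coupons and replacement parameter K_B, the factor f_B = (E[T_{B,K_B}] + K_B)/B converges to ln(1/α) + α as B → ∞. In particular, for a single collector the ratio of the mean number of cards to be bought (including the directly purchased missing cards) to the album size depends asymptotically only on the fraction α of purchasable replacement cards, not on the album size B. -/

import Mathlib

open MeasureTheory ProbabilityTheory Filter
open scoped ENNReal

/-- The uniform probability measure on `Fin B`. -/
noncomputable def uniformFin (B : ℕ) : Measure (Fin B) :=
  (B : ℝ≥0∞)⁻¹ • Measure.count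

/-- The stopping time `T_{B,K}`: the least `n` such that at least `B - K` distinct coupons
appear among the first `n` draws. -/
noncomputable def collectTime (B K : ℕ) (ω : ℕ → Fin B) : ℕ :=
  sInf {n : ℕ | B - K ≤ (Finset.image ω (Finset.range n)).card}

noncomputable def potH (B M d : ℕ) : ℝ := ∑ j ∈ Finset.Ico d M, (B : ℝ) / ((B : ℝ) - j)

lemma potH_of_ge {B M d : ℕ} (h : M ≤ d) : potH B M d = 0 := by
  simp [potH, Finset.Ico_eq_empty_of_le h]

lemma potH_succ {B M d : ℕ} (h : d < M) :
    potH B M d = (B : ℝ) / ((B : ℝ) - d) + potH B M (d + 1) := by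
  simp [potH, Finset.sum_eq_sum_Ico_succ_bot h]

lemma potH_nonneg {B M d : ℕ} (h : M ≤ B) : 0 ≤ potH B M d := by
  apply Finset.sum_nonneg
  intro j hj
  have : (j : ℝ) ≤ B := by exact_mod_cast ((Finset.mem_Ico.1 hj).2.le.trans h)
  have : (0 : ℝ) ≤ B - j := by linarith
  positivity

lemma potH_le {B M d : ℕ} (h : M ≤ B) :
    potH B M d ≤ potH B M 0 * (if d < M then 1 else 0) := by
  split_ifs with hd
  · rw [mul_one]
    apply Finset.sum_le_sum_of_subset_of_nonneg
    · exact Finset.Ico_subset_Ico_left (Nat.zero_le _)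
    · intro j hj _
      have : (j : ℝ) ≤ B := by exact_mod_cast ((Finset.mem_Ico.1 hj).2.le.trans h)
      have : (0 : ℝ) ≤ B - j := by linarith
      positivity
  · rw [potH_of_ge (not_lt.1 hd)]; simp

lemma potH_step {B M : ℕ} (h : M ≤ B) (hB : 1 ≤ B) (S : Finset (Fin B)) :
    (B : ℝ)⁻¹ * ∑ x, potH B M (insert x S).card =
      potH B M S.card - (if S.card < M then 1 else 0) := by
  have hB' : (B : ℝ) ≠ 0 := by positivity
  split_ifs with hS
  · have h1 : ∀ x : Fin B, potH B M (insert x S).card =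
        potH B M (S.card + 1) + if x ∈ S then (B : ℝ) / ((B : ℝ) - S.card) else 0 := by
      intro x
      split_ifs with hx
      · rw [Finset.insert_eq_of_mem hx, potH_succ hS]; ring
      · rw [Finset.card_insert_of_notMem hx]; ring
    rw [Finset.sum_congr rfl (fun x _ => h1 x), Finset.sum_add_distrib, potH_succ hS]
    have : ((B : ℝ) - S.card) ≠ 0 := by
      have : (S.card : ℝ) < B := by exact_mod_cast hS.trans_le h
      linarith
    simp only [Finset.sum_const, Finset.card_univ, Fintype.card_fin, nsmul_eq_mul,
      Finset.sum_ite_mem, Finset.univ_inter]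
    field_simp
    ring
  · have h1 : ∀ x : Fin B, potH B M (insert x S).card = 0 := fun x =>
      potH_of_ge ((not_lt.1 hS).trans (Finset.card_le_card (Finset.subset_insert x S)))
    simp [h1, potH_of_ge (not_lt.1 hS)]

def seen {B : ℕ} (n : ℕ) (ω : ℕ → Fin B) : Finset (Fin B) := Finset.image ω (Finset.range n)

local instance finsetMS (B : ℕ) : MeasurableSpace (Finset (Fin B)) := ⊤

local instance finsetDMS (B : ℕ) : DiscreteMeasurableSpace (Finset (Fin B)) := ⟨fun _ => trivial⟩

lemma seen_eq {B : ℕ} (n : ℕ) : (seen n : (ℕ → Fin B) → Finset (Fin B)) =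
    (fun f : (Finset.range n → Fin B) => Finset.image f Finset.univ) ∘
      (fun ω (i : Finset.range n) => ω i) := by
  funext ω
  ext x
  simp [seen]

lemma measurable_seen {B : ℕ} (n : ℕ) :
    Measurable (seen n : (ℕ → Fin B) → Finset (Fin B)) := by
  rw [seen_eq]
  exact Measurable.of_discrete.comp (by fun_prop)

lemma seen_succ {B : ℕ} (n : ℕ) (ω : ℕ → Fin B) : seen (n+1) ω = insert (ω n) (seen n ω) := by
  simp [seen, Finset.range_add_one]

lemma seen_indep {B : ℕ} {μ : Measure (ℕ → Fin B)}
    (hI : iIndepFun (fun i (ω : ℕ → Fin B) => ω i) μ) (n : ℕ) :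
    IndepFun (seen n) (fun ω => ω n) μ := by
  have := hI.indepFun_finset (Finset.range n) {n} (by simp) (fun i => measurable_pi_apply i)
  rw [seen_eq]
  exact this.comp (φ := fun f : (Finset.range n → Fin B) => Finset.image f Finset.univ)
    (ψ := fun f : (({n} : Finset ℕ) → Fin B) => f ⟨n, by simp⟩)
    Measurable.of_discrete Measurable.of_discrete

lemma integrable_seen {B : ℕ} {μ : Measure (ℕ → Fin B)} [IsProbabilityMeasure μ] (n : ℕ)
    (F : Finset (Fin B) → ℝ) : Integrable (fun ω => F (seen n ω)) μ := by
  have : IsProbabilityMeasure (μ.map (seen n)) :=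
    Measure.isProbabilityMeasure_map (measurable_seen n).aemeasurable
  exact (Integrable.of_finite (f := F) (μ := μ.map (seen n))).comp_measurable (measurable_seen n)

lemma step {B M : ℕ} (h : M ≤ B) (hB : 1 ≤ B) {μ : Measure (ℕ → Fin B)} [IsProbabilityMeasure μ]
    (hI : iIndepFun (fun i (ω : ℕ → Fin B) => ω i) μ)
    (hU : ∀ i : ℕ, μ.map (fun ω => ω i) = uniformFin B) (n : ℕ) :
    ∫ ω, potH B M (seen (n+1) ω).card ∂μ =
      ∫ ω, potH B M (seen n ω).card ∂μ - μ.real {ω | (seen n ω).card < M} := by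
  have hm := measurable_seen (B := B) n
  have hmn : Measurable (fun ω : ℕ → Fin B => ω n) := measurable_pi_apply n
  have i1 : IsProbabilityMeasure (μ.map (seen n)) :=
    Measure.isProbabilityMeasure_map hm.aemeasurable
  have i2 : IsProbabilityMeasure (uniformFin B) := by
    rw [← hU n]; exact Measure.isProbabilityMeasure_map hmn.aemeasurable
  have hp := (indepFun_iff_map_prod_eq_prod_map_map hm.aemeasurable hmn.aemeasurable).1
    (seen_indep hI n)
  rw [hU n] at hp
  let F : Finset (Fin B) × Fin B → ℝ := fun p => potH B M (insert p.2 p.1).card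
  have e1 : ∫ ω, potH B M (seen (n+1) ω).card ∂μ =
      ∫ p, F p ∂((μ.map (seen n)).prod (uniformFin B)) := by
    rw [← hp, integral_map (hm.prodMk hmn).aemeasurable
      (Measurable.of_discrete (f := F)).aestronglyMeasurable]
    simp only [F, seen_succ]
  have e2 : ∀ S, ∫ x, F (S, x) ∂(uniformFin B) =
      potH B M S.card - (if S.card < M then 1 else 0) := by
    intro S
    rw [← potH_step h hB S, uniformFin, integral_smul_measure, integral_count]
    simp [F]
  rw [e1, integral_prod _ Integrable.of_finite]
  simp only [e2]
  rw [integral_map hm.aemeasurable (Measurable.of_discrete).aestronglyMeasurable,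
    integral_sub (integrable_seen n (fun S => potH B M S.card))
      (integrable_seen n (fun S => if S.card < M then (1:ℝ) else 0))]
  congr 1
  have : MeasurableSet {ω : ℕ → Fin B | (seen n ω).card < M} :=
    hm (MeasurableSet.of_discrete (s := {S : Finset (Fin B) | S.card < M}))
  rw [← integral_indicator_one this]
  simp [Set.indicator_apply]

lemma hasSum_prob {B M : ℕ} (h : M ≤ B) (hB : 1 ≤ B) {μ : Measure (ℕ → Fin B)}
    [IsProbabilityMeasure μ]
    (hI : iIndepFun (fun i (ω : ℕ → Fin B) => ω i) μ)
    (hU : ∀ i : ℕ, μ.map (fun ω => ω i) = uniformFin B) :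
    HasSum (fun n => μ.real {ω | (seen n ω).card < M}) (potH B M 0) := by
  have hs : ∀ N, ∑ n ∈ Finset.range N, μ.real {ω | (seen n ω).card < M} =
      potH B M 0 - ∫ ω, potH B M (seen N ω).card ∂μ := by
    intro N
    induction N with
    | zero => simp [seen]
    | succ N ih => rw [Finset.sum_range_succ, ih, step h hB hI hU N]; ring
  have hsum : Summable (fun n => μ.real {ω | (seen n ω).card < M}) := by
    apply summable_of_sum_range_le (c := potH B M 0) (fun n => measureReal_nonneg)
    intro N
    rw [hs]
    have : 0 ≤ ∫ ω, potH B M (seen N ω).card ∂μ := integral_nonneg (fun ω => potH_nonneg h)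
    linarith
  have h0 := hsum.tendsto_atTop_zero
  rw [hasSum_iff_tendsto_nat_of_nonneg (fun n => measureReal_nonneg)]
  simp only [hs]
  have : Tendsto (fun N => ∫ ω, potH B M (seen N ω).card ∂μ) atTop (nhds 0) := by
    refine squeeze_zero (fun N => integral_nonneg (fun ω => potH_nonneg h)) (fun N => ?_)
      (by simpa using h0.const_mul (potH B M 0))
    have hms : MeasurableSet {ω : ℕ → Fin B | (seen N ω).card < M} :=
      measurable_seen N (MeasurableSet.of_discrete (s := {S : Finset (Fin B) | S.card < M}))
    rw [← integral_indicator_one hms, ← integral_const_mul]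
    have := integral_mono (μ := μ) (integrable_seen N (fun S => potH B M S.card))
      (integrable_seen N (fun S => potH B M 0 * (if S.card < M then 1 else 0)))
      (fun ω => potH_le h)
    simpa [Set.indicator_apply] using this
  simpa using tendsto_const_nhds.sub this

lemma seen_mono {B : ℕ} (ω : ℕ → Fin B) : Monotone (fun n => (seen n ω).card) := by
  intro m n hmn
  exact Finset.card_le_card (Finset.image_subset_image (Finset.range_mono hmn))

lemma expect {B K : ℕ} (hB : 1 ≤ B) {μ : Measure (ℕ → Fin B)}
    [IsProbabilityMeasure μ]
    (hI : iIndepFun (fun i (ω : ℕ → Fin B) => ω i) μ)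
    (hU : ∀ i : ℕ, μ.map (fun ω => ω i) = uniformFin B) :
    ∫ ω, (collectTime B K ω : ℝ) ∂μ = potH B (B - K) 0 := by
  set M := B - K with hM
  have h : M ≤ B := Nat.sub_le _ _
  have hsum := hasSum_prob h hB hI hU
  have hms : ∀ n, MeasurableSet {ω : ℕ → Fin B | (seen n ω).card < M} := fun n =>
    measurable_seen n (MeasurableSet.of_discrete (s := {S : Finset (Fin B) | S.card < M}))
  have hae : ∀ᵐ ω ∂μ, ∃ n, M ≤ (seen n ω).card := by
    rw [ae_iff]
    have h0 := hsum.summable.tendsto_atTop_zero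
    have hle : μ.real {ω | ¬ ∃ n, M ≤ (seen n ω).card} ≤ 0 := by
      refine ge_of_tendsto' h0 (fun n => measureReal_mono ?_)
      intro ω hω
      simp only [Set.mem_ofPred_eq, not_exists, not_le] at hω ⊢
      exact hω n
    have := le_antisymm hle measureReal_nonneg
    exact (measureReal_eq_zero_iff (by finiteness)).1 this
  have hT : ∀ᵐ ω ∂μ, ∀ n, n < collectTime B K ω ↔ (seen n ω).card < M := by
    filter_upwards [hae] with ω hω n
    have hmem : M ≤ (seen (collectTime B K ω) ω).card := Nat.sInf_mem hω
    constructor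
    · intro hn
      exact not_le.1 (Nat.notMem_of_lt_sInf (s := {n : ℕ | M ≤ (seen n ω).card}) hn)
    · intro hn
      by_contra hc
      exact absurd (hmem.trans (seen_mono ω (not_lt.1 hc))) (not_le.2 hn)
  have hval : ∀ᵐ ω ∂μ, HasSum (fun n => {ω | (seen n ω).card < M}.indicator (1 : (ℕ → Fin B) → ℝ) ω)
      (collectTime B K ω : ℝ) := by
    filter_upwards [hT] with ω hω
    have : (collectTime B K ω : ℝ) = ∑ n ∈ Finset.range (collectTime B K ω),
        {ω | (seen n ω).card < M}.indicator (1 : (ℕ → Fin B) → ℝ) ω := by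
      rw [Finset.sum_congr rfl (g := fun _ => (1 : ℝ))]
      · simp
      · intro n hn
        have hx : ω ∈ {ω : ℕ → Fin B | (seen n ω).card < M} := (hω n).1 (Finset.mem_range.1 hn)
        simp [Set.indicator_of_mem hx]
    rw [this]
    apply hasSum_sum_of_ne_finset_zero
    intro n hn
    apply Set.indicator_of_notMem
    intro hc
    exact hn (Finset.mem_range.2 ((hω n).2 hc))
  have key := hasSum_integral_of_summable_integral_norm (μ := μ)
    (F := fun n => {ω : ℕ → Fin B | (seen n ω).card < M}.indicator (1 : (ℕ → Fin B) → ℝ))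
    (fun n => (integrable_const (1:ℝ)).indicator (hms n)) (by
      refine hsum.summable.congr (fun n => ?_)
      rw [← integral_indicator_one (hms n)]
      congr 1; funext ω
      simp only [Set.indicator_apply]; split_ifs <;> simp)
  simp only [integral_indicator_one (hms _)] at key
  rw [← key.unique hsum]
  apply integral_congr_ae
  filter_upwards [hval] with ω hω
  exact hω.tsum_eq.symm

lemma potH_harmonic {B K : ℕ} (hK : K ≤ B) :
    potH B (B - K) 0 = B * ((harmonic B : ℝ) - harmonic K) := by
  obtain ⟨m, rfl⟩ := Nat.exists_eq_add_of_le hK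
  have e : ∀ m, (harmonic (K + m) : ℝ) - harmonic K =
      ∑ i ∈ Finset.range m, (1 : ℝ) / (K + i + 1) := by
    intro m
    induction m with
    | zero => simp
    | succ m ih =>
      rw [Finset.sum_range_succ, ← ih, ← add_assoc, harmonic_succ]
      push_cast
      rw [one_div]; ring
  rw [e, ← Finset.sum_range_reflect, potH, Nat.add_sub_cancel_left, ← Finset.range_eq_Ico,
    Finset.mul_sum]
  apply Finset.sum_congr rfl
  intro j hj
  have hj := Finset.mem_range.1 hj
  rw [mul_one_div]
  congr 1
  rw [Nat.sub_sub, Nat.cast_sub (by omega)]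
  push_cast; ring

/-- **The factor depends asymptotically only on the replacement fraction.** Fix `α ∈ (0,1]` and
set `K_B = ⌈α B⌉`. For any family `μ B` of probability measures on `ℕ → Fin B` (for `B ≥ 1`)
under which the draws are independent and uniform on the `B` coupons, the factor
`f_B = (E[T_{B,K_B}] + K_B)/B` converges to `ln(1/α) + α` as `B → ∞`. -/
theorem factor_tendsto_of_replacement_fraction
    (α : ℝ) (hα : α ∈ Set.Ioc (0 : ℝ) 1)
    (μ : ∀ B : ℕ, Measure (ℕ → Fin B))
    (hprob : ∀ B : ℕ, 1 ≤ B → IsProbabilityMeasure (μ B))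
    (hIndep : ∀ B : ℕ, 1 ≤ B →
      iIndepFun (fun i (ω : ℕ → Fin B) => ω i) (μ B))
    (hUnif : ∀ B : ℕ, 1 ≤ B → ∀ i : ℕ, (μ B).map (fun ω => ω i) = uniformFin B) :
    Tendsto
      (fun B : ℕ =>
        ((∫ ω, (collectTime B ⌈α * B⌉₊ ω : ℝ) ∂(μ B)) + (⌈α * B⌉₊ : ℝ)) / B)
      atTop (nhds (Real.log (1 / α) + α)) := by
  obtain ⟨h0, h1⟩ := hα
  have hdiv : Tendsto (fun B : ℕ => (⌈α * B⌉₊ : ℝ) / B) atTop (nhds α) :=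
    (tendsto_nat_ceil_mul_div_atTop h0.le).comp tendsto_natCast_atTop_atTop
  have hKtop : Tendsto (fun B : ℕ => ⌈α * (B : ℝ)⌉₊) atTop atTop :=
    tendsto_nat_ceil_atTop.comp (tendsto_natCast_atTop_atTop.const_mul_atTop h0)
  have hg := Real.tendsto_harmonic_sub_log
  have hlog : Tendsto (fun B : ℕ => Real.log ((⌈α * B⌉₊ : ℝ) / B)) atTop
      (nhds (Real.log α)) := hdiv.log h0.ne'
  have hmain := (((hg.sub (hg.comp hKtop)).sub hlog).add hdiv)
  rw [show Real.log (1 / α) + α = Real.eulerMascheroniConstant - Real.eulerMascheroniConstant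
    - Real.log α + α by rw [one_div, Real.log_inv]; ring]
  refine hmain.congr' ?_
  filter_upwards [eventually_ge_atTop 1] with B hB
  have := hprob B hB
  have hBpos : (0 : ℝ) < B := by exact_mod_cast hB
  have hKpos : 0 < ⌈α * (B : ℝ)⌉₊ := Nat.ceil_pos.2 (by positivity)
  have hKB : ⌈α * (B : ℝ)⌉₊ ≤ B := Nat.ceil_le.2 (by nlinarith)
  rw [expect hB (hIndep B hB) (hUnif B hB), potH_harmonic hKB]
  have hKpos' : (0 : ℝ) < (⌈α * (B : ℝ)⌉₊ : ℝ) := by exact_mod_cast hKpos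
  simp only [Function.comp]
  rw [Real.log_div hKpos'.ne' hBpos.ne']
  field_simp
  ring
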